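/- arXiv:2604.25290 — 9 statements merged into one kernel-verified Lean document; each statement's English description precedes it below -/
import Mathlib

section
/- Let V be a linear subspace of C¹(ℝⁿ,ℝ) that contains the coordinate maps, and suppose the control system ẋ = f̃(x,u), with f̃ : ℝⁿ × ℝᵐ → ℝⁿ continuously differentiable in x, admits an LTI Koopman representation with respect to V. Then the system is control-affine with constant input matrix: there exist f ∈ C¹(ℝⁿ,ℝⁿ) and a constant matrix G ∈ ℝ^{n×m} such that f̃(x,u) = f(x) + G u for all x ∈ ℝⁿ and u ∈ ℝᵐ. -/
/-- A control system `ẋ = ft x u` admits an LTI Koopman representation w.r.t. a linear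
subspace `V` of `C¹(ℝⁿ,ℝ)` if for every `ψ ∈ V` and `u ∈ ℝᵐ` the function
`x ↦ ⟨∇ψ(x), ft x u⟩` lies again in `V`, and there is a linear map `B : V → ℝᵐ` with
`⟨∇ψ(x), ft x u⟩ = ⟨∇ψ(x), ft x 0⟩ + ⟨Bψ, u⟩` for all `x, u`.
Here `⟨∇ψ(x), v⟩` is encoded as `fderiv ℝ ψ x v`. -/
def KoopmanLTI (n m : ℕ) (ft : (Fin n → ℝ) → (Fin m → ℝ) → (Fin n → ℝ))
    (V : Submodule ℝ ((Fin n → ℝ) → ℝ)) : Prop :=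
  (∀ ψ ∈ V, ∀ u : Fin m → ℝ, (fun x => fderiv ℝ ψ x (ft x u)) ∈ V) ∧
  ∃ B : V →ₗ[ℝ] (Fin m → ℝ), ∀ ψ : V, ∀ (x : Fin n → ℝ) (u : Fin m → ℝ),
    fderiv ℝ (ψ : (Fin n → ℝ) → ℝ) x (ft x u)
      = fderiv ℝ (ψ : (Fin n → ℝ) → ℝ) x (ft x 0) + ∑ j, B ψ j * u j

/-- If a control system, continuously differentiable in the state, admits an LTI Koopman
representation w.r.t. a subspace of `C¹` functions containing the coordinate maps, then its
dynamics are control-affine with constant input matrix:  `ft x u = f x + G u`. -/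
theorem stmt0 (n m : ℕ) (ft : (Fin n → ℝ) → (Fin m → ℝ) → (Fin n → ℝ))
    (hft : ∀ u : Fin m → ℝ, ContDiff ℝ 1 (fun x => ft x u))
    (V : Submodule ℝ ((Fin n → ℝ) → ℝ))
    (hV1 : ∀ ψ ∈ V, ContDiff ℝ 1 ψ)
    (hVcoord : ∀ i : Fin n, (fun x : Fin n → ℝ => x i) ∈ V)
    (hK : KoopmanLTI n m ft V) :
    ∃ (f : (Fin n → ℝ) → (Fin n → ℝ)) (G : Matrix (Fin n) (Fin m) ℝ),
      ContDiff ℝ 1 f ∧ ∀ (x : Fin n → ℝ) (u : Fin m → ℝ), ft x u = f x + G.mulVec u := by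
  obtain ⟨-, B, hB⟩ := hK
  -- Row `i` of `G` is the image under `B` of the `i`-th coordinate map.
  refine ⟨fun x => ft x 0, Matrix.of fun i => B ⟨_, hVcoord i⟩, hft 0, fun x u => ?_⟩
  ext i
  have hcoord : fderiv ℝ (fun x : Fin n → ℝ => x i) x = ContinuousLinearMap.proj i :=
    (ContinuousLinearMap.proj (R := ℝ) (φ := fun _ : Fin n => ℝ) i).fderiv
  have h := hB ⟨_, hVcoord i⟩ x u
  simp only [hcoord, ContinuousLinearMap.proj_apply] at h
  simpa [Matrix.mulVec, dotProduct] using h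
end

section
/- Let the control-affine system ẋ = f(x) + Gu with f ∈ C¹(ℝⁿ,ℝⁿ) and G ∈ ℝ^{n×m} be directionally excitable, and suppose it admits an LTI Koopman representation with respect to a linear subspace V of C¹(ℝⁿ,ℝ) that contains the coordinate maps. Then the system is affine linear: there exist a matrix F ∈ ℝ^{n×n} and a vector d ∈ ℝⁿ such that f(x) = Fx + d for all x ∈ ℝⁿ. -/
/-- The control-affine system `ẋ = f x + G u` is directionally excitable if there exist
vectors `v⁰,…,vⁿ⁻¹ ∈ ℝⁿ` such that the matrix `T = [v⁰ ⋯ vⁿ⁻¹]` is invertible, `vⁱ` equals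
the `i`-th column of `G` for `i < m`, and for every `i ≥ m` there are a point `xⁱ` and an
index `j < i` with `vⁱ = (∂f/∂x)(xⁱ) v^j`. -/
def DirExcitable (n m : ℕ) (f : (Fin n → ℝ) → (Fin n → ℝ))
    (G : Matrix (Fin n) (Fin m) ℝ) : Prop :=
  ∃ v : Fin n → (Fin n → ℝ),
    IsUnit ((Matrix.of fun i j => v j i) : Matrix (Fin n) (Fin n) ℝ) ∧
    (∀ (i : Fin n) (h : (i : ℕ) < m), v i = fun k => G k ⟨(i : ℕ), h⟩) ∧
    (∀ i : Fin n, m ≤ (i : ℕ) →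
      ∃ (x : Fin n → ℝ) (j : Fin n), (j : ℕ) < (i : ℕ) ∧ v i = fderiv ℝ f x (v j))

/-- `w` is a constant direction of `V`: the derivative along `w` of each function in `V` is a
constant function. -/
def ConstDir {n : ℕ} (V : Submodule ℝ ((Fin n → ℝ) → ℝ)) (w : Fin n → ℝ) : Prop :=
  ∀ ψ ∈ V, ∀ x y, fderiv ℝ ψ x w = fderiv ℝ ψ y w

lemma hasDerivAt_line {n : ℕ} {E : Type*} [NormedAddCommGroup E] [NormedSpace ℝ E]
    {g : (Fin n → ℝ) → E} (hg : Differentiable ℝ g) (x w : Fin n → ℝ) (t : ℝ) :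
    HasDerivAt (fun s : ℝ => g (x + s • w)) (fderiv ℝ g (x + t • w) w) t := by
  have h1 : HasDerivAt (fun s : ℝ => x + s • w) w t := by
    simpa using ((hasDerivAt_id t).smul_const w).const_add x
  exact (hg (x + t • w)).hasFDerivAt.comp_hasDerivAt t h1

lemma fderiv_translate {n : ℕ} {ψ : (Fin n → ℝ) → ℝ} (hψ : Differentiable ℝ ψ)
    {w : Fin n → ℝ} (hw : ∀ x y, fderiv ℝ ψ x w = fderiv ℝ ψ y w) (x : Fin n → ℝ) (t : ℝ) :
    fderiv ℝ ψ (x + t • w) = fderiv ℝ ψ x := by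
  have h1 : ∀ y, ψ (y + t • w) = ψ y + t * fderiv ℝ ψ 0 w := by
    intro y
    have hd : ∀ s : ℝ, HasDerivAt (fun s : ℝ => ψ (y + s • w) - s * fderiv ℝ ψ 0 w) 0 s := by
      intro s
      have h := (hasDerivAt_line hψ y w s).sub
        ((hasDerivAt_id s).mul_const (fderiv ℝ ψ 0 w))
      rw [hw (y + s • w) 0, one_mul, sub_self] at h
      exact h
    have h := is_const_of_deriv_eq_zero (fun s => (hd s).differentiableAt)
      (fun s => (hd s).deriv) t 0
    simp only [zero_smul, add_zero, zero_mul, sub_zero] at h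
    linarith
  rw [← fderiv_comp_add_right (t • w), funext h1, fderiv_add_const]

/-- The derivative of `Dψ · f` along a constant direction has no second-order term. -/
lemma fderiv_koopman {n : ℕ} {f : (Fin n → ℝ) → (Fin n → ℝ)} (hf : Differentiable ℝ f)
    {ψ : (Fin n → ℝ) → ℝ} (hψ : Differentiable ℝ ψ)
    (hφ : Differentiable ℝ fun x => fderiv ℝ ψ x (f x))
    {w : Fin n → ℝ} (hw : ∀ x y, fderiv ℝ ψ x w = fderiv ℝ ψ y w) (x : Fin n → ℝ) :
    fderiv ℝ (fun x => fderiv ℝ ψ x (f x)) x w = fderiv ℝ ψ x (fderiv ℝ f x w) := by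
  have h1 := hasDerivAt_line hφ x w 0
  have h2 := (fderiv ℝ ψ x).hasFDerivAt.comp_hasDerivAt (0 : ℝ) (hasDerivAt_line hf x w 0)
  simp only [fderiv_translate hψ hw] at h1
  simpa only [zero_smul, add_zero] using h1.unique h2

/-- A directionally excitable control-affine system admitting an LTI Koopman representation
w.r.t. a subspace of `C¹` functions containing the coordinate maps must be affine linear:
`f x = F x + d`. -/
theorem stmt1 (n m : ℕ) (f : (Fin n → ℝ) → (Fin n → ℝ)) (hf : ContDiff ℝ 1 f)
    (G : Matrix (Fin n) (Fin m) ℝ)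
    (hexc : DirExcitable n m f G)
    (V : Submodule ℝ ((Fin n → ℝ) → ℝ))
    (hV1 : ∀ ψ ∈ V, ContDiff ℝ 1 ψ)
    (hVcoord : ∀ i : Fin n, (fun x : Fin n → ℝ => x i) ∈ V)
    (hK : KoopmanLTI n m (fun x u => f x + G.mulVec u) V) :
    ∃ (F : Matrix (Fin n) (Fin n) ℝ) (d : Fin n → ℝ),
      ∀ x : Fin n → ℝ, f x = F.mulVec x + d := by
  obtain ⟨hinv, B, hB⟩ := hK
  obtain ⟨v, hv, hvG, hvf⟩ := hexc
  have hfd : Differentiable ℝ f := hf.differentiable one_ne_zero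
  have hVd : ∀ ψ ∈ V, Differentiable ℝ ψ := fun ψ h => (hV1 ψ h).differentiable one_ne_zero
  have hinv0 : ∀ ψ ∈ V, (fun x => fderiv ℝ ψ x (f x)) ∈ V := by
    intro ψ h
    simpa using hinv ψ h 0
  have key : ∀ w, ConstDir V w → ∀ ψ ∈ V, ∀ x y,
      fderiv ℝ ψ x (fderiv ℝ f x w) = fderiv ℝ ψ y (fderiv ℝ f y w) := by
    intro w hw ψ h x y
    rw [← fderiv_koopman hfd (hVd ψ h) (hVd _ (hinv0 ψ h)) (hw ψ h),
      ← fderiv_koopman hfd (hVd ψ h) (hVd _ (hinv0 ψ h)) (hw ψ h)]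
    exact hw _ (hinv0 ψ h) x y
  have keyf : ∀ w, ConstDir V w → ∀ x y, fderiv ℝ f x w = fderiv ℝ f y w := by
    intro w hw x y
    ext i
    have hc : ∀ z, fderiv ℝ (fun x : Fin n → ℝ => x i) z =
        ContinuousLinearMap.proj (R := ℝ) (φ := fun _ : Fin n => ℝ) i :=
      fun z => (ContinuousLinearMap.proj (R := ℝ) (φ := fun _ : Fin n => ℝ) i).fderiv
    simpa [hc] using key w hw _ (hVcoord i) x y
  have hG : ∀ k : Fin m, ConstDir V (fun i => G i k) := by
    have h1 : ∀ k : Fin m, ∀ ψ : V, ∀ x,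
        fderiv ℝ (ψ : (Fin n → ℝ) → ℝ) x (fun i => G i k) = B ψ k := by
      intro k ψ x
      have h := hB ψ x (Pi.single k 1)
      have hcol : G.mulVec (Pi.single k 1) = fun i => G i k := by
        ext i; simp
      beta_reduce at h
      rw [hcol] at h
      simpa [Pi.single_apply] using h
    intro k ψ hψ x y
    rw [h1 k ⟨ψ, hψ⟩ x, h1 k ⟨ψ, hψ⟩ y]
  have hall : ∀ k : ℕ, ∀ i : Fin n, (i : ℕ) = k → ConstDir V (v i) := by
    intro k
    induction k using Nat.strong_induction_on with
    | _ k ih =>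
      intro i hi
      by_cases h : (i : ℕ) < m
      · rw [hvG i h]; exact hG _
      · obtain ⟨p, j, hj, hij⟩ := hvf i (not_lt.mp h)
        have hjc := ih j (hi ▸ hj) j rfl
        intro ψ hψ x y
        have hx : v i = fderiv ℝ f x (v j) := hij.trans (keyf _ hjc p x)
        have hy : v i = fderiv ℝ f y (v j) := hij.trans (keyf _ hjc p y)
        calc fderiv ℝ ψ x (v i) = fderiv ℝ ψ x (fderiv ℝ f x (v j)) := by rw [← hx]
          _ = fderiv ℝ ψ y (fderiv ℝ f y (v j)) := key _ hjc ψ hψ x y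
          _ = fderiv ℝ ψ y (v i) := by rw [← hy]
  have hspan : ∀ w : Fin n → ℝ, ∃ c : Fin n → ℝ, w = ∑ i, c i • v i := by
    intro w
    obtain ⟨c, hc⟩ := Matrix.mulVec_surjective_iff_isUnit.mpr hv w
    refine ⟨c, ?_⟩
    rw [← hc]
    ext i
    simp [Matrix.mulVec, dotProduct, mul_comm]
  have hconst : ∀ x, fderiv ℝ f x = fderiv ℝ f 0 := by
    intro x
    ext1 w
    obtain ⟨c, rfl⟩ := hspan w
    simp only [map_sum, map_smul]
    exact Finset.sum_congr rfl fun i _ => by rw [keyf _ (hall _ i rfl) x 0]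
  refine ⟨LinearMap.toMatrix' (fderiv ℝ f 0 : (Fin n → ℝ) →ₗ[ℝ] (Fin n → ℝ)), f 0, fun x => ?_⟩
  have hd : ∀ y, HasFDerivAt (fun y => f y - fderiv ℝ f 0 y)
      (0 : (Fin n → ℝ) →L[ℝ] (Fin n → ℝ)) y := by
    intro y
    have h := (hfd y).hasFDerivAt.sub (fderiv ℝ f 0).hasFDerivAt
    rwa [hconst y, sub_self] at h
  have h := is_const_of_fderiv_eq_zero (𝕜 := ℝ) (fun y => (hd y).differentiableAt)
    (fun y => (hd y).fderiv) x 0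
  simp only [map_zero, sub_zero] at h
  rw [LinearMap.toMatrix'_mulVec, ← h]
  simp
end

section
/- Let the control-affine system ẋ = f(x) + Gu with f ∈ C¹(ℝⁿ,ℝⁿ) and G ∈ ℝ^{n×m} be directionally excitable, and suppose it admits an LTI Koopman representation with respect to a linear subspace V of C¹(ℝⁿ,ℝ) that contains the coordinate maps. Then every observable in V is affine: for each ψ ∈ V there exist coefficients α₀, α₁, …, αₙ ∈ ℝ such that ψ(x) = α₀ + Σᵢ₌₁ⁿ αᵢ xᵢ for all x ∈ ℝⁿ. -/
/-- A differentiable function with constant derivative along `v` is affine along `v`, hence its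
full derivative is invariant under translations along `v`. -/
lemma fderiv_add_smul_of_const {n : ℕ} {ψ : (Fin n → ℝ) → ℝ} (hψ : Differentiable ℝ ψ)
    {v : Fin n → ℝ} (hv : ∀ x y, fderiv ℝ ψ x v = fderiv ℝ ψ y v) (x : Fin n → ℝ) (t : ℝ) :
    fderiv ℝ ψ (x + t • v) = fderiv ℝ ψ x := by
  have key : ∀ y, ψ (y + t • v) = ψ y + t * fderiv ℝ ψ 0 v := by
    intro y
    have hd : ∀ s : ℝ, HasDerivAt (fun s : ℝ => ψ (y + s • v) - s * fderiv ℝ ψ 0 v) 0 s := by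
      intro s
      have h1 : HasDerivAt (fun s : ℝ => y + s • v) v s := by
        simpa using ((hasDerivAt_id s).smul_const v).const_add y
      have h2 := (hψ (y + s • v)).hasFDerivAt.comp_hasDerivAt s h1
      have h3 := h2.sub ((hasDerivAt_id s).mul_const (fderiv ℝ ψ 0 v))
      rw [hv (y + s • v) 0, one_mul, sub_self] at h3
      exact h3
    have := is_const_of_deriv_eq_zero (fun s => (hd s).differentiableAt)
      (fun s => (hd s).deriv) t 0
    simp at this
    linarith
  have h := fderiv_comp_add_right (𝕜 := ℝ) (f := ψ) (x := x) (t • v)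
  rw [← h, funext key, fderiv_add_const]

/-- Derivative along `v` of the Lie derivative `Dψ · f`. Only `f` is differentiated, as `Dψ` is
constant along `v`; in particular no second derivative of `ψ` is involved. -/
lemma fderiv_lie_apply {n : ℕ} {ψ : (Fin n → ℝ) → ℝ} (hψ : Differentiable ℝ ψ)
    {f : (Fin n → ℝ) → (Fin n → ℝ)} (hf : Differentiable ℝ f)
    (hL : Differentiable ℝ (fun x => fderiv ℝ ψ x (f x)))
    {v : Fin n → ℝ} (hv : ∀ x y, fderiv ℝ ψ x v = fderiv ℝ ψ y v) (x : Fin n → ℝ) :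
    fderiv ℝ (fun x => fderiv ℝ ψ x (f x)) x v = fderiv ℝ ψ x (fderiv ℝ f x v) := by
  have h0 : x + (0 : ℝ) • v = x := by simp
  have h1 : HasDerivAt (fun s : ℝ => x + s • v) v 0 := by
    simpa using ((hasDerivAt_id (0 : ℝ)).smul_const v).const_add x
  have h2 := (hL (x + (0 : ℝ) • v)).hasFDerivAt.comp_hasDerivAt (0 : ℝ) h1
  have h3 := (fderiv ℝ ψ x).hasFDerivAt.comp_hasDerivAt (0 : ℝ)
    ((hf (x + (0 : ℝ) • v)).hasFDerivAt.comp_hasDerivAt (0 : ℝ) h1)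
  rw [h0] at h2 h3
  refine h2.unique (h3.congr_of_eventuallyEq (Filter.Eventually.of_forall fun s => ?_))
  simp [fderiv_add_smul_of_const hψ hv x s]

/-- If all observables of `V` have constant derivative along `v`, the same holds along
`Df(x₀) v`, for any `x₀`. -/
lemma const_step {n : ℕ} {f : (Fin n → ℝ) → (Fin n → ℝ)} (hf : Differentiable ℝ f)
    {V : Submodule ℝ ((Fin n → ℝ) → ℝ)} (hV1 : ∀ ψ ∈ V, Differentiable ℝ ψ)
    (hVcoord : ∀ i : Fin n, (fun x : Fin n → ℝ => x i) ∈ V)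
    (hL : ∀ ψ ∈ V, (fun x => fderiv ℝ ψ x (f x)) ∈ V)
    {v : Fin n → ℝ} (hv : ∀ ψ ∈ V, ∀ x y, fderiv ℝ ψ x v = fderiv ℝ ψ y v)
    (x₀ : Fin n → ℝ) :
    ∀ ψ ∈ V, ∀ x y, fderiv ℝ ψ x (fderiv ℝ f x₀ v) = fderiv ℝ ψ y (fderiv ℝ f x₀ v) := by
  have key : ∀ ψ ∈ V, ∀ x y,
      fderiv ℝ ψ x (fderiv ℝ f x v) = fderiv ℝ ψ y (fderiv ℝ f y v) := by
    intro ψ hψ x y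
    rw [← fderiv_lie_apply (hV1 ψ hψ) hf (hV1 _ (hL ψ hψ)) (hv ψ hψ),
      ← fderiv_lie_apply (hV1 ψ hψ) hf (hV1 _ (hL ψ hψ)) (hv ψ hψ)]
    exact hv _ (hL ψ hψ) x y
  have hconst : ∀ x, fderiv ℝ f x₀ v = fderiv ℝ f x v := by
    intro x
    ext k
    have hk : ∀ z : Fin n → ℝ, fderiv ℝ (fun x : Fin n → ℝ => x k) z
        = ContinuousLinearMap.proj (R := ℝ) (φ := fun _ : Fin n => ℝ) k := fun z =>
      (ContinuousLinearMap.proj (R := ℝ) (φ := fun _ : Fin n => ℝ) k).fderiv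
    simpa [hk] using key _ (hVcoord k) x₀ x
  intro ψ hψ x y
  have h := key ψ hψ x y
  rwa [← hconst x, ← hconst y] at h

/-- If a directionally excitable control-affine system admits an LTI Koopman representation
w.r.t. a subspace of `C¹` functions containing the coordinate maps, then every observable in
the subspace is affine: `ψ x = α₀ + ∑ i, αᵢ xᵢ`. -/
theorem stmt2 (n m : ℕ) (f : (Fin n → ℝ) → (Fin n → ℝ)) (hf : ContDiff ℝ 1 f)
    (G : Matrix (Fin n) (Fin m) ℝ)
    (hexc : DirExcitable n m f G)
    (V : Submodule ℝ ((Fin n → ℝ) → ℝ))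
    (hV1 : ∀ ψ ∈ V, ContDiff ℝ 1 ψ)
    (hVcoord : ∀ i : Fin n, (fun x : Fin n → ℝ => x i) ∈ V)
    (hK : KoopmanLTI n m (fun x u => f x + G.mulVec u) V) :
    ∀ ψ ∈ V, ∃ (α₀ : ℝ) (α : Fin n → ℝ),
      ∀ x : Fin n → ℝ, ψ x = α₀ + ∑ i, α i * x i := by
  obtain ⟨v, hT, hG, hchain⟩ := hexc
  obtain ⟨hinv, B, hB⟩ := hK
  have hfd : Differentiable ℝ f := hf.differentiable one_ne_zero
  have hVd : ∀ ψ ∈ V, Differentiable ℝ ψ := fun ψ h => (hV1 ψ h).differentiable one_ne_zero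
  have hL : ∀ ψ ∈ V, (fun x => fderiv ℝ ψ x (f x)) ∈ V := by
    intro ψ hψ
    simpa using hinv ψ hψ 0
  have hcol : ∀ ψ ∈ V, ∀ j : Fin m, ∀ x y,
      fderiv ℝ ψ x (fun k => G k j) = fderiv ℝ ψ y (fun k => G k j) := by
    intro ψ hψ j x y
    have hj : G.mulVec (Pi.single j 1) = fun k => G k j := by
      ext k
      simp
    have hx := hB ⟨ψ, hψ⟩ x (Pi.single j 1)
    have hy := hB ⟨ψ, hψ⟩ y (Pi.single j 1)
    simp only [hj, map_add, Matrix.mulVec_zero, map_zero, add_zero] at hx hy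
    linarith
  have hall : ∀ (N : ℕ) (i : Fin n), (i : ℕ) = N →
      ∀ ψ ∈ V, ∀ x y, fderiv ℝ ψ x (v i) = fderiv ℝ ψ y (v i) := by
    intro N
    induction N using Nat.strong_induction_on with
    | _ N ih =>
      intro i hi
      by_cases him : (i : ℕ) < m
      · rw [hG i him]
        exact fun ψ hψ => hcol ψ hψ _
      · obtain ⟨x₀, j, hji, hvi⟩ := hchain i (not_lt.mp him)
        rw [hvi]
        exact const_step hfd hVd hVcoord hL (ih j (hi ▸ hji) j rfl) x₀
  intro ψ hψ
  have hD : ∀ x, fderiv ℝ ψ x = fderiv ℝ ψ 0 := by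
    intro x
    ext1 w
    obtain ⟨a, rfl⟩ := Matrix.mulVec_surjective_iff_isUnit.mpr hT w
    have ha : (Matrix.of fun i j => v j i).mulVec a = ∑ j, a j • v j := by
      ext k
      simp [Matrix.mulVec, dotProduct, mul_comm]
    rw [ha, map_sum, map_sum]
    exact Finset.sum_congr rfl fun j _ => by
      rw [map_smul, map_smul, hall j j rfl ψ hψ x 0]
  have hdiff : ∀ x, HasFDerivAt (fun x => ψ x - fderiv ℝ ψ 0 x) (0 : (Fin n → ℝ) →L[ℝ] ℝ) x := by
    intro x
    have h := (hVd ψ hψ x).hasFDerivAt.sub (fderiv ℝ ψ 0).hasFDerivAt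
    rwa [hD x, sub_self] at h
  refine ⟨ψ 0, fun i => fderiv ℝ ψ 0 (Pi.single i 1), fun x => ?_⟩
  have hc := is_const_of_fderiv_eq_zero (𝕜 := ℝ) (fun x => (hdiff x).differentiableAt)
    (fun x => (hdiff x).fderiv) x 0
  have hx : fderiv ℝ ψ 0 x = ∑ i, fderiv ℝ ψ 0 (Pi.single i 1) * x i := by
    conv_lhs => rw [pi_eq_sum_univ' x]
    simp [map_sum, mul_comm]
  simp only [map_zero, sub_zero] at hc
  rw [← hx]
  linarith
end

section
/- Let the control-affine system ẋ = f(x) + Gu with f ∈ C¹(ℝⁿ,ℝⁿ) and G ∈ ℝ^{n×m} admit an LTI Koopman representation with respect to a linear subspace V of C¹(ℝⁿ,ℝ) that contains the coordinate maps. Let T ∈ ℝ^{n×n} be any invertible matrix whose first m columns are the columns g¹,…,gᵐ of G, and define V_T := { φ ∈ C¹(ℝⁿ,ℝ) : ∃ ψ ∈ V such that φ(y) = ψ(Ty) for all y ∈ ℝⁿ }. Then every φ ∈ V_T is affine in the first m coordinates: there exist constants α₁,…,αₘ ∈ ℝ such that φ(y) = φ(0,…,0,y_{m+1},…,yₙ)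 + Σᵢ₌₁ᵐ αᵢ yᵢ for all y ∈ ℝⁿ. -/
theorem eq_add_of_fderiv_apply_eq {E : Type*} [NormedAddCommGroup E] [NormedSpace ℝ E]
    {ψ : E → ℝ} (hψ : Differentiable ℝ ψ) (v : E) (c : ℝ) (h : ∀ x, fderiv ℝ ψ x v = c) (x : E) :
    ψ (x + v) = ψ x + c := by
  have hd : ∀ t : ℝ, HasDerivAt (fun t : ℝ => ψ (x + t • v) - t * c) 0 t := by
    intro t
    have h1 : HasDerivAt (fun t : ℝ => x + t • v) v t := by
      simpa using ((hasDerivAt_id t).smul_const v).const_add x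
    have h2 := (hψ (x + t • v)).hasFDerivAt.comp_hasDerivAt t h1
    have h3 := h2.sub ((hasDerivAt_id t).mul_const c)
    rw [h, one_mul, sub_self] at h3
    exact h3
  have := is_const_of_deriv_eq_zero (fun t => (hd t).differentiableAt) (fun t => (hd t).deriv) 1 0
  simp at this
  linarith

/-- Lemma 2 (iv): if the control-affine system `ẋ = f x + Gu` admits an LTI Koopman
representation w.r.t. a subspace `V ⊆ C¹` containing the coordinate maps, and `T` is any
invertible matrix whose first `m` columns are the columns of `G`, then every member of
`V_T = {φ : φ = ψ ∘ T, ψ ∈ V}` is affine in the first `m` coordinates. -/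
theorem stmt5 (n m : ℕ) (f : (Fin n → ℝ) → (Fin n → ℝ)) (hf : ContDiff ℝ 1 f)
    (G : Matrix (Fin n) (Fin m) ℝ)
    (V : Submodule ℝ ((Fin n → ℝ) → ℝ))
    (hV1 : ∀ ψ ∈ V, ContDiff ℝ 1 ψ)
    (hVcoord : ∀ i : Fin n, (fun x : Fin n → ℝ => x i) ∈ V)
    (hK : KoopmanLTI n m (fun x u => f x + G.mulVec u) V)
    (T : Matrix (Fin n) (Fin n) ℝ) (hT : IsUnit T)
    (hTG : ∀ (i : Fin n) (h : (i : ℕ) < m) (k : Fin n), T k i = G k ⟨(i : ℕ), h⟩)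
    (φ : (Fin n → ℝ) → ℝ) (hφ : ContDiff ℝ 1 φ)
    (hφVT : ∃ ψ ∈ V, ∀ y : Fin n → ℝ, φ y = ψ (T.mulVec y)) :
    ∃ α : Fin n → ℝ, ∀ y : Fin n → ℝ,
      φ y = φ (fun k => if (k : ℕ) < m then 0 else y k)
        + ∑ i ∈ Finset.univ.filter (fun i : Fin n => (i : ℕ) < m), α i * y i := by
  obtain ⟨ψ, hψ, hφψ⟩ := hφVT
  obtain ⟨-, B, hB⟩ := hK
  have hdiff : Differentiable ℝ ψ := (hV1 ψ hψ).differentiable (by norm_num)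
  have hG : ∀ x u, fderiv ℝ ψ x (G.mulVec u) = ∑ j, B ⟨ψ, hψ⟩ j * u j := by
    intro x u
    have := hB ⟨ψ, hψ⟩ x u
    simp only [Matrix.mulVec_zero, add_zero, map_add] at this
    linarith
  have hcol : ∀ i : Fin n, (i : ℕ) < m → ∀ x,
      fderiv ℝ ψ x (T.col i) = fderiv ℝ ψ 0 (T.col i) := by
    intro i hi x
    have : T.col i = G.mulVec (Pi.single ⟨i, hi⟩ 1) := by
      ext k
      simp [hTG i hi k]
    rw [this, hG, hG]
  refine ⟨fun i => fderiv ℝ ψ 0 (T.col i), fun y => ?_⟩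
  set y₀ : Fin n → ℝ := fun k => if (k : ℕ) < m then 0 else y k with hy₀
  have hsplit : T.mulVec y = T.mulVec y₀ +
      ∑ i ∈ Finset.univ.filter (fun i : Fin n => (i : ℕ) < m), y i • T.col i := by
    ext k
    simp only [Matrix.mulVec, dotProduct, Pi.add_apply, Finset.sum_apply,
      Finset.sum_filter, ← Finset.sum_add_distrib, hy₀]
    refine Finset.sum_congr rfl fun i _ => ?_
    split_ifs <;> simp [mul_comm]
  rw [hφψ, hφψ, hsplit]
  refine eq_add_of_fderiv_apply_eq hdiff _ _ (fun x => ?_) _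
  rw [map_sum]
  refine Finset.sum_congr rfl fun i hi => ?_
  rw [map_smul, hcol i (Finset.mem_filter.mp hi).2 x, smul_eq_mul, mul_comm]
end

section
/- Let the control-affine system ẋ = f(x) + Gu with f ∈ C¹(ℝⁿ,ℝⁿ) and G ∈ ℝ^{n×m} be directionally excitable with witnessing invertible matrix T = [v¹ ⋯ vⁿ], and suppose the system admits an LTI Koopman representation with respect to a linear subspace V of C¹(ℝⁿ,ℝ) that contains the coordinate maps. Define V_T := { φ ∈ C¹(ℝⁿ,ℝ) : ∃ ψ ∈ V such that φ(y) = ψ(Ty) for all y ∈ ℝⁿ }. Then every φ ∈ V_T is affine: there exist constants α₀, α₁, …, αₙ ∈ ℝ such that φ(y) = α₀ + Σᵢ₌₁ⁿ αᵢ yᵢ for all y ∈ ℝⁿ. -/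
/-- A function whose derivative in direction `v` is the constant `c` is affine along `v`. -/
lemma affine_along {E : Type*} [NormedAddCommGroup E] [NormedSpace ℝ E] {ψ : E → ℝ}
    (hψ : Differentiable ℝ ψ) {v : E} {c : ℝ} (h : ∀ x, fderiv ℝ ψ x v = c) (x : E) (t : ℝ) :
    ψ (x + t • v) = ψ x + t * c := by
  have hd : ∀ s : ℝ, HasDerivAt (fun s : ℝ => ψ (x + s • v) - s * c) 0 s := by
    intro s
    have h1 : HasDerivAt (fun s : ℝ => x + s • v) v s := by
      simpa using ((hasDerivAt_id s).smul_const v).const_add x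
    have h2 := (hψ (x + s • v)).hasFDerivAt.comp_hasDerivAt s h1
    have h3 := h2.sub ((hasDerivAt_id s).mul_const c)
    rw [h, one_mul, sub_self] at h3
    exact h3
  have := is_const_of_deriv_eq_zero (fun s => (hd s).differentiableAt) (fun s => (hd s).deriv) t 0
  simp only [zero_smul, add_zero, zero_mul, sub_zero] at this
  linarith

/-- If both `ψ` and its Lie derivative `Dψ · f` have constant derivative in direction `v`, then
`Dψ(x) (Df(x) v)` is the second constant: the term involving the second derivative of `ψ`
vanishes because `Dψ` is invariant under translation along `v`. -/
lemma dirDeriv_step {E : Type*} [NormedAddCommGroup E] [NormedSpace ℝ E] {ψ : E → ℝ}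
    {f : E → E} (hψ : Differentiable ℝ ψ) (hf : Differentiable ℝ f) {v : E} {c d : ℝ}
    (hL : Differentiable ℝ fun x => fderiv ℝ ψ x (f x))
    (h : ∀ x, fderiv ℝ ψ x v = c)
    (hd : ∀ x, fderiv ℝ (fun x => fderiv ℝ ψ x (f x)) x v = d) (x : E) :
    fderiv ℝ ψ x (fderiv ℝ f x v) = d := by
  have hinv : ∀ t : ℝ, fderiv ℝ ψ (x + t • v) = fderiv ℝ ψ x := by
    intro t
    rw [← fderiv_comp_add_right]
    have : (fun y => ψ (y + t • v)) = fun y => ψ y + t * c :=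
      funext fun y => affine_along hψ h y t
    rw [this, fderiv_add_const]
  have hlin : ∀ t : ℝ, fderiv ℝ ψ x (f (x + t • v)) = fderiv ℝ ψ x (f x) + t * d := by
    intro t
    have := affine_along hL hd x t
    simpa only [hinv] using this
  have h1 : HasDerivAt (fun t : ℝ => x + t • v) v 0 := by
    simpa using ((hasDerivAt_id (0 : ℝ)).smul_const v).const_add x
  have hfx : HasFDerivAt f (fderiv ℝ f x) (x + (0 : ℝ) • v) := by
    simpa using (hf x).hasFDerivAt
  have h2 : HasDerivAt (fun t : ℝ => fderiv ℝ ψ x (f (x + t • v)))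
      (fderiv ℝ ψ x (fderiv ℝ f x v)) 0 :=
    (fderiv ℝ ψ x).hasFDerivAt.comp_hasDerivAt 0 (hfx.comp_hasDerivAt 0 h1)
  have h3 : HasDerivAt (fun t : ℝ => fderiv ℝ ψ x (f x) + t * d) d 0 := by
    simpa using ((hasDerivAt_id (0 : ℝ)).mul_const d).const_add (fderiv ℝ ψ x (f x))
  rw [funext hlin] at h2
  exact h2.unique h3

/-- Lemma 2 (v): if a control-affine system is directionally excitable with witnessing
invertible matrix `T = [v⁰ ⋯ vⁿ⁻¹]` and admits an LTI Koopman representation w.r.t. a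
subspace `V ⊆ C¹` containing the coordinate maps, then every member of
`V_T = {φ : φ = ψ ∘ T, ψ ∈ V}` is affine. -/
theorem stmt6 (n m : ℕ) (f : (Fin n → ℝ) → (Fin n → ℝ)) (hf : ContDiff ℝ 1 f)
    (G : Matrix (Fin n) (Fin m) ℝ)
    (v : Fin n → (Fin n → ℝ))
    (hTinv : IsUnit ((Matrix.of fun i j => v j i) : Matrix (Fin n) (Fin n) ℝ))
    (hvG : ∀ (i : Fin n) (h : (i : ℕ) < m), v i = fun k => G k ⟨(i : ℕ), h⟩)
    (hvrec : ∀ i : Fin n, m ≤ (i : ℕ) →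
      ∃ (x : Fin n → ℝ) (j : Fin n), (j : ℕ) < (i : ℕ) ∧ v i = fderiv ℝ f x (v j))
    (V : Submodule ℝ ((Fin n → ℝ) → ℝ))
    (hV1 : ∀ ψ ∈ V, ContDiff ℝ 1 ψ)
    (hVcoord : ∀ i : Fin n, (fun x : Fin n → ℝ => x i) ∈ V)
    (hK : KoopmanLTI n m (fun x u => f x + G.mulVec u) V)
    (φ : (Fin n → ℝ) → ℝ) (hφ : ContDiff ℝ 1 φ)
    (hφVT : ∃ ψ ∈ V, ∀ y : Fin n → ℝ,
      φ y = ψ (((Matrix.of fun i j => v j i) : Matrix (Fin n) (Fin n) ℝ).mulVec y)) :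
    ∃ (α₀ : ℝ) (α : Fin n → ℝ), ∀ y : Fin n → ℝ, φ y = α₀ + ∑ i, α i * y i := by
  obtain ⟨hKinv, B, hB⟩ := hK
  have hfd : Differentiable ℝ f := hf.differentiable one_ne_zero
  have hVd : ∀ ψ ∈ V, Differentiable ℝ ψ := fun ψ h => (hV1 ψ h).differentiable one_ne_zero
  have hL : ∀ ψ ∈ V, (fun x => fderiv ℝ ψ x (f x)) ∈ V := by
    intro ψ hψ
    simpa using hKinv ψ hψ 0
  have key : ∀ k : ℕ, ∀ i : Fin n, (i : ℕ) = k → ∀ ψ ∈ V, ∃ c : ℝ, ∀ x, fderiv ℝ ψ x (v i) = c := by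
    intro k
    induction k using Nat.strong_induction_on with
    | _ k ih =>
      intro i hik ψ hψ
      rcases lt_or_ge (i : ℕ) m with him | him
      · refine ⟨B ⟨ψ, hψ⟩ ⟨i, him⟩, fun x => ?_⟩
        have h := hB ⟨ψ, hψ⟩ x (Pi.single ⟨i, him⟩ 1)
        have hcol : G.mulVec (Pi.single ⟨i, him⟩ 1) = v i := by
          rw [hvG i him, Matrix.mulVec_single_one]
          rfl
        simpa [hcol, Pi.single_apply] using h
      · obtain ⟨x₀, j, hji, hvi⟩ := hvrec i him
        have hstep : ∀ ψ ∈ V, ∃ d : ℝ, ∀ x, fderiv ℝ ψ x (fderiv ℝ f x (v j)) = d := by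
          intro ψ hψ
          obtain ⟨c, hc⟩ := ih j (hik ▸ hji) j rfl ψ hψ
          obtain ⟨d, hd⟩ := ih j (hik ▸ hji) j rfl _ (hL ψ hψ)
          exact ⟨d, dirDeriv_step (hVd ψ hψ) hfd (hVd _ (hL ψ hψ)) hc hd⟩
        have hconst : ∀ x, fderiv ℝ f x (v j) = v i := by
          intro x
          rw [hvi]
          ext l
          obtain ⟨d, hd⟩ := hstep _ (hVcoord l)
          have hp : ∀ y w : Fin n → ℝ, fderiv ℝ (fun x : Fin n → ℝ => x l) y w = w l := by
            intro y w
            rw [(hasFDerivAt_apply l y).fderiv]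
            rfl
          simp only [hp] at hd
          rw [hd, hd]
        obtain ⟨d, hd⟩ := hstep ψ hψ
        exact ⟨d, fun x => by rw [← hd x, hconst]⟩
  obtain ⟨ψ, hψ, hφψ⟩ := hφVT
  choose c hc using fun i : Fin n => key i i rfl ψ hψ
  refine ⟨ψ 0, c, fun y => ?_⟩
  have hT : ((Matrix.of fun i j => v j i) : Matrix (Fin n) (Fin n) ℝ).mulVec y
      = ∑ i, y i • v i := by
    ext l
    simp [Matrix.mulVec, dotProduct, mul_comm]
  have hdir : ∀ x, fderiv ℝ ψ x (∑ i, y i • v i) = ∑ i, c i * y i := by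
    intro x
    simp [map_sum, hc, mul_comm]
  have := affine_along (hVd ψ hψ) hdir 0 1
  rw [hφψ, hT]
  simpa using this
end

section
/- Let f ∈ C¹(ℝⁿ,ℝⁿ), G ∈ ℝ^{n×m}, and let W ⊆ ℝⁿ be a linear subspace that contains every column of G and is invariant under the Jacobian of f at every point, i.e., (∂f/∂x)(x) w ∈ W for all x ∈ ℝⁿ and w ∈ W. Let u¹, u² : [0,∞) → ℝᵐ be continuous controls and let x₁, x₂ : [0,T) → ℝⁿ be solutions of ẋᵢ(t) = f(xᵢ(t)) + G uⁱ(t) with the same initial condition x₁(0) = x₂(0). Then x₁(t) − x₂(t) ∈ W for all t ∈ [0,T); in particular, ⟨c, x₁(t)⟩ = ⟨c, x₂(t)⟩ for every c ∈ W^⊥ and all t ∈ [0,T). -/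
/-!
Let `P` be a continuous linear projection of `ℝⁿ` with kernel `W`. Invariance of `W` under every
Jacobian makes `P ∘ f` constant along the cosets of `W` (`proj_comp_eq`), so `P (f x) = P (f (P x))`.
Since moreover `P` kills the columns of `G`, both `P ∘ x1` and `P ∘ x2` solve the autonomous
equation `ẏ = P (f y)`, whose right-hand side is `C¹`. They start at the same point, so by
uniqueness they coincide, i.e. `x1 t - x2 t ∈ ker P = W`.
-/

/-- If the derivative of `f` maps `ker P` into itself at every point, then `P ∘ f` takes the same
value at points whose difference lies in `ker P`: its derivative vanishes along the segment. -/
lemma proj_comp_eq {E : Type*} [NormedAddCommGroup E] [NormedSpace ℝ E] {f : E → E}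
    (hf : Differentiable ℝ f) (P : E →L[ℝ] E)
    (hinv : ∀ x w, P w = 0 → P (fderiv ℝ f x w) = 0) {a b : E} (hab : P (b - a) = 0) :
    P (f b) = P (f a) := by
  have hd : ∀ s : ℝ, HasDerivAt (fun s : ℝ => P (f (a + s • (b - a)))) 0 s := by
    intro s
    have h1 : HasDerivAt (fun s : ℝ => a + s • (b - a)) (b - a) s := by
      simpa using ((hasDerivAt_id s).smul_const (b - a)).const_add a
    have h2 := P.hasFDerivAt.comp_hasDerivAt s
      ((hf (a + s • (b - a))).hasFDerivAt.comp_hasDerivAt s h1)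
    rw [hinv _ _ hab] at h2
    exact h2
  have h := is_const_of_deriv_eq_zero (fun s => (hd s).differentiableAt)
    (fun s => (hd s).deriv) 1 0
  simpa using h

/-- If a linear subspace `W ⊆ ℝⁿ` contains all columns of `G` and is invariant under the
Jacobian of `f` at every point, then two solutions of `ẋ = f x + G u` with the same initial
condition (and possibly different continuous controls) differ only within `W`; in particular
their components along any vector orthogonal to `W` coincide. -/
theorem stmt8 (n m : ℕ) (f : (Fin n → ℝ) → (Fin n → ℝ)) (hf : ContDiff ℝ 1 f)
    (G : Matrix (Fin n) (Fin m) ℝ)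
    (W : Submodule ℝ (Fin n → ℝ))
    (hGW : ∀ j : Fin m, (fun k => G k j) ∈ W)
    (hWinv : ∀ (x : Fin n → ℝ), ∀ w ∈ W, fderiv ℝ f x w ∈ W)
    (u1 u2 : ℝ → (Fin m → ℝ))
    (hu1 : ContinuousOn u1 (Set.Ici 0)) (hu2 : ContinuousOn u2 (Set.Ici 0))
    (T : ℝ) (x1 x2 : ℝ → (Fin n → ℝ))
    (hx1 : ∀ t ∈ Set.Ico (0 : ℝ) T, HasDerivAt x1 (f (x1 t) + G.mulVec (u1 t)) t)
    (hx2 : ∀ t ∈ Set.Ico (0 : ℝ) T, HasDerivAt x2 (f (x2 t) + G.mulVec (u2 t)) t)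
    (h0 : x1 0 = x2 0) :
    (∀ t ∈ Set.Ico (0 : ℝ) T, x1 t - x2 t ∈ W) ∧
    ∀ c : Fin n → ℝ, (∀ w ∈ W, ∑ i, c i * w i = 0) →
      ∀ t ∈ Set.Ico (0 : ℝ) T, (∑ i, c i * x1 t i) = ∑ i, c i * x2 t i := by
  have hmain : ∀ t ∈ Set.Ico (0 : ℝ) T, x1 t - x2 t ∈ W := by
    intro T' hT'
    obtain ⟨V, hV⟩ := W.exists_isCompl
    let P : (Fin n → ℝ) →L[ℝ] (Fin n → ℝ) := (V.projection W hV.symm).toContinuousLinearMap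
    have hker : ∀ x, P x = 0 ↔ x ∈ W := fun x => by simp [P]
    have hidem : ∀ x, P (P x) = P x := fun x =>
      Submodule.projection_apply_of_mem_left _ (Submodule.projection_apply_mem hV.symm x)
    have hPG : ∀ v, P (G.mulVec v) = 0 := by
      intro v
      rw [hker, Matrix.mulVec_eq_sum]
      exact W.sum_mem fun j _ => by
        rw [op_smul_eq_smul]
        exact W.smul_mem _ (hGW j)
    have hPf : ∀ x, P (f x) = P (f (P x)) := fun x =>
      proj_comp_eq (hf.differentiable one_ne_zero) P
        (fun x w hw => (hker _).2 (hWinv x w ((hker w).1 hw))) (by simp [hidem])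
    -- the projected trajectories solve the autonomous equation `ẏ = P (f y)`
    have hy : ∀ (x : ℝ → Fin n → ℝ) (u : ℝ → Fin m → ℝ),
        (∀ t ∈ Set.Ico (0 : ℝ) T, HasDerivAt x (f (x t) + G.mulVec (u t)) t) →
        ∀ t ∈ Set.Icc (0 : ℝ) T', HasDerivAt (fun t => P (x t)) (P (f (P (x t)))) t := by
      intro x u hx t ht
      have h := P.hasFDerivAt.comp_hasDerivAt t (hx t ⟨ht.1, ht.2.trans_lt hT'.2⟩)
      rw [map_add, hPG, add_zero, hPf] at h
      exact h
    have hy1 := hy x1 u1 hx1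
    have hy2 := hy x2 u2 hx2
    have hc1 : ContinuousOn (fun t => P (x1 t)) (Set.Icc 0 T') :=
      fun t ht => (hy1 t ht).continuousAt.continuousWithinAt
    have hc2 : ContinuousOn (fun t => P (x2 t)) (Set.Icc 0 T') :=
      fun t ht => (hy2 t ht).continuousAt.continuousWithinAt
    -- a locally Lipschitz field is Lipschitz on the compact union of the two projected arcs
    obtain ⟨K, hK⟩ := LocallyLipschitzOn.exists_lipschitzOnWith_of_compact
      ((isCompact_Icc.image_of_continuousOn hc1).union (isCompact_Icc.image_of_continuousOn hc2))
      ((P.contDiff.comp hf).locallyLipschitz.locallyLipschitzOn)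
    have heq := ODE_solution_unique_of_mem_Icc_right (v := fun _ => P ∘ f) (fun _ _ => hK)
      hc1 (fun t ht => (hy1 t (Set.Ico_subset_Icc_self ht)).hasDerivWithinAt)
      (fun t ht => Or.inl (Set.mem_image_of_mem _ (Set.Ico_subset_Icc_self ht)))
      hc2 (fun t ht => (hy2 t (Set.Ico_subset_Icc_self ht)).hasDerivWithinAt)
      (fun t ht => Or.inr (Set.mem_image_of_mem _ (Set.Ico_subset_Icc_self ht)))
      (by simp [h0])
    have h := heq (Set.right_mem_Icc.2 hT'.1)
    rw [← hker, map_sub, sub_eq_zero]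
    exact h
  refine ⟨hmain, fun c hc t ht => ?_⟩
  have h := hc _ (hmain t ht)
  simpa [mul_sub, sub_eq_zero] using h
end

section
/- Let the control-affine system ẋ = f(x) + Gu with f ∈ C¹(ℝⁿ,ℝⁿ) and G ∈ ℝ^{n×m} admit an LTI Koopman representation with respect to a linear subspace V of C¹(ℝⁿ,ℝ) that contains the coordinate maps. Then the map x ↦ (∂f/∂x)(x) G is constant on ℝⁿ; equivalently, for every i ∈ {1,…,n} and j ∈ {1,…,m} there exists α_{ij} ∈ ℝ such that ⟨∇fᵢ(x), gʲ⟩ = α_{ij} for all x ∈ ℝⁿ, where gʲ is the j-th column of G. -/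
/-- If the control-affine system `ẋ = f x + G u` admits an LTI Koopman representation w.r.t.
a subspace of `C¹` functions containing the coordinate maps, then `x ↦ (∂f/∂x)(x) G` is
constant: for all `i, j` there is `α` with `⟨∇fᵢ(x), gʲ⟩ = α` for all `x`. -/
theorem stmt11 (n m : ℕ) (f : (Fin n → ℝ) → (Fin n → ℝ)) (hf : ContDiff ℝ 1 f)
    (G : Matrix (Fin n) (Fin m) ℝ)
    (V : Submodule ℝ ((Fin n → ℝ) → ℝ))
    (hV1 : ∀ ψ ∈ V, ContDiff ℝ 1 ψ)
    (hVcoord : ∀ i : Fin n, (fun x : Fin n → ℝ => x i) ∈ V)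
    (hK : KoopmanLTI n m (fun x u => f x + G.mulVec u) V) :
    ∀ (i : Fin n) (j : Fin m), ∃ α : ℝ,
      ∀ x : Fin n → ℝ, fderiv ℝ (fun y => f y i) x (fun k => G k j) = α := by
  obtain ⟨hinv, B, hB⟩ := hK
  intro i j
  have hcoord : ∀ x v : Fin n → ℝ, fderiv ℝ (fun x : Fin n → ℝ => x i) x v = v i := fun x v => by
    rw [(hasFDerivAt_apply i x).fderiv]
    rfl
  -- The Lie derivative of the `i`-th coordinate along the drift is `fᵢ`, so `fᵢ ∈ V`.
  have hfi : (fun x => f x i) ∈ V := by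
    have h := hinv _ (hVcoord i) 0
    simpa only [hcoord, Matrix.mulVec_zero, add_zero] using h
  refine ⟨B ⟨_, hfi⟩ j, fun x => ?_⟩
  -- Applying the affine identity to `fᵢ` with the `j`-th unit input isolates `⟨∇fᵢ(x), gʲ⟩`.
  have h := hB ⟨_, hfi⟩ x (Pi.single j 1)
  beta_reduce at h
  rw [Matrix.mulVec_single_one, Matrix.mulVec_zero, add_zero, map_add, add_right_inj] at h
  simp only [Pi.single_apply, mul_ite, mul_one, mul_zero, Finset.sum_ite_eq',
    Finset.mem_univ, if_true] at h
  exact h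
end

section
/- The system on ℝ² given by ẋ = f(x) + g u with f(x) = (x₁ − x₂², x₂) and g = (0, 1) is directionally excitable, and it does not admit an LTI Koopman representation with respect to any linear subspace V of C¹(ℝ²,ℝ) that contains the coordinate maps. -/
theorem hasFDerivAt_sub_sq (x : Fin 2 → ℝ) :
    HasFDerivAt (fun y : Fin 2 → ℝ => y 0 - (y 1) ^ 2)
      (ContinuousLinearMap.proj (R := ℝ) (φ := fun _ : Fin 2 => ℝ) 0
        - (2 * x 1) • ContinuousLinearMap.proj (R := ℝ) (φ := fun _ : Fin 2 => ℝ) 1) x := by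
  have h0 := hasFDerivAt_apply (𝕜 := ℝ) (F' := fun _ : Fin 2 => ℝ) 0 x
  have h1 := hasFDerivAt_apply (𝕜 := ℝ) (F' := fun _ : Fin 2 => ℝ) 1 x
  convert! h0.sub (h1.pow 2) using 1
  simp

theorem hasFDerivAt_drift (x : Fin 2 → ℝ) :
    HasFDerivAt (fun y : Fin 2 → ℝ => fun i => ![y 0 - (y 1) ^ 2, y 1] i)
      (ContinuousLinearMap.pi
        ![ContinuousLinearMap.proj (R := ℝ) (φ := fun _ : Fin 2 => ℝ) 0
          - (2 * x 1) • ContinuousLinearMap.proj (R := ℝ) (φ := fun _ : Fin 2 => ℝ) 1,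
          ContinuousLinearMap.proj (R := ℝ) (φ := fun _ : Fin 2 => ℝ) 1]) x := by
  rw [hasFDerivAt_pi]
  intro i
  fin_cases i
  · exact hasFDerivAt_sub_sq x
  · exact hasFDerivAt_apply (𝕜 := ℝ) (F' := fun _ : Fin 2 => ℝ) 1 x

/-- Example 2: the system `ẋ₁ = x₁ − x₂²`, `ẋ₂ = x₂ + u` is directionally excitable, and it
admits no LTI Koopman representation w.r.t. any subspace of `C¹(ℝ²,ℝ)` containing the
coordinate maps. -/
theorem stmt17 :
    DirExcitable 2 1 (fun x => fun i => ![x 0 - (x 1) ^ 2, x 1] i) (!![(0 : ℝ); 1]) ∧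
    ∀ V : Submodule ℝ ((Fin 2 → ℝ) → ℝ),
      (∀ ψ ∈ V, ContDiff ℝ 1 ψ) →
      (∀ i : Fin 2, (fun x : Fin 2 → ℝ => x i) ∈ V) →
      ¬ KoopmanLTI 2 1 (fun x u => (fun i => ![x 0 - (x 1) ^ 2, x 1] i) +
          (!![(0 : ℝ); 1]).mulVec u) V := by
  constructor
  · refine ⟨![![0, 1], ![-2, 1]], ?_, ?_, ?_⟩
    · rw [Matrix.isUnit_iff_isUnit_det, Matrix.det_fin_two]
      simp
    · intro i h
      fin_cases i
      · funext k
        fin_cases k <;> simp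
      · simp at h
    · intro i h
      fin_cases i
      · simp at h
      · refine ⟨![0, 1], 0, by simp, ?_⟩
        rw [(hasFDerivAt_drift _).fderiv]
        funext k
        fin_cases k <;> simp
  · rintro V - hcoord ⟨hinv, B, hB⟩
    have hmem : (fun x : Fin 2 → ℝ => x 0 - (x 1) ^ 2) ∈ V := by
      convert hinv _ (hcoord 0) 0 using 2 with x
      rw [(hasFDerivAt_apply (𝕜 := ℝ) (F' := fun _ : Fin 2 => ℝ) 0 x).fderiv]
      simp
    -- Comparing the points `(0, 0)` and `(0, 1)` at input `1` shows that `-2 x₂` is not constant.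
    have e0 := hB ⟨_, hmem⟩ ![0, 0] ![1]
    have e1 := hB ⟨_, hmem⟩ ![0, 1] ![1]
    rw [(hasFDerivAt_sub_sq _).fderiv] at e0 e1
    simp [Matrix.vecHead, Matrix.vecTail] at e0 e1
    linarith
end

section
/- The three-dimensional system ẋ = f(x) + g u with f(x) = (x₂², x₃, 0) and g = (0, 0, 1) is directionally excitable, and it does not admit an LTI Koopman representation with respect to any linear subspace V of C¹(ℝ³,ℝ) that contains the coordinate maps. -/
/-- The Jacobian of the drift `(x₂², x₃, 0)` applied to `w`. -/
lemma fderiv_drift (x w : Fin 3 → ℝ) :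
    fderiv ℝ (fun x : Fin 3 → ℝ => fun i => ![(x 1) ^ 2, x 2, 0] i) x w
      = ![2 * x 1 * w 1, w 2, 0] := by
  have h1 : HasFDerivAt (fun x : Fin 3 → ℝ => x 1) (ContinuousLinearMap.proj (R := ℝ) 1) x :=
    hasFDerivAt_apply 1 x
  have h2 : HasFDerivAt (fun x : Fin 3 → ℝ => x 2) (ContinuousLinearMap.proj (R := ℝ) 2) x :=
    hasFDerivAt_apply 2 x
  have h : HasFDerivAt (fun x : Fin 3 → ℝ => fun i => ![(x 1) ^ 2, x 2, 0] i)
      (ContinuousLinearMap.pi ![(2 * x 1) • ContinuousLinearMap.proj (R := ℝ) 1,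
        ContinuousLinearMap.proj (R := ℝ) 2, 0]) x := by
    rw [hasFDerivAt_pi]
    intro i
    fin_cases i
    · simpa using h1.pow 2
    · simpa using h2
    · simpa using hasFDerivAt_const (0 : ℝ) x
  rw [h.fderiv]
  ext i
  fin_cases i <;> simp

lemma fderiv_sq_coord (x w : Fin 3 → ℝ) :
    fderiv ℝ (fun x : Fin 3 → ℝ => (x 1) ^ 2) x w = 2 * x 1 * w 1 := by
  have h1 : HasFDerivAt (fun x : Fin 3 → ℝ => x 1) (ContinuousLinearMap.proj (R := ℝ) 1) x :=
    hasFDerivAt_apply 1 x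
  rw [(h1.pow 2).fderiv]
  simp

lemma fderiv_mul_coord (x w : Fin 3 → ℝ) :
    fderiv ℝ (fun x : Fin 3 → ℝ => 2 * x 1 * x 2) x w = 2 * x 1 * w 2 + 2 * x 2 * w 1 := by
  have h1 : HasFDerivAt (fun x : Fin 3 → ℝ => x 1) (ContinuousLinearMap.proj (R := ℝ) 1) x :=
    hasFDerivAt_apply 1 x
  have h2 : HasFDerivAt (fun x : Fin 3 → ℝ => x 2) (ContinuousLinearMap.proj (R := ℝ) 2) x :=
    hasFDerivAt_apply 2 x
  rw [HasFDerivAt.fderiv (f := fun x : Fin 3 → ℝ => 2 * x 1 * x 2) ((h1.const_mul 2).mul h2)]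
  simp
  ring

/-- Example 3: the three-dimensional system `ẋ₁ = x₂²`, `ẋ₂ = x₃`, `ẋ₃ = u` is directionally
excitable, and it admits no LTI Koopman representation w.r.t. any subspace of `C¹(ℝ³,ℝ)`
containing the coordinate maps. -/
theorem stmt18 :
    DirExcitable 3 1 (fun x => fun i => ![(x 1) ^ 2, x 2, 0] i) (!![(0 : ℝ); 0; 1]) ∧
    ∀ V : Submodule ℝ ((Fin 3 → ℝ) → ℝ),
      (∀ ψ ∈ V, ContDiff ℝ 1 ψ) →
      (∀ i : Fin 3, (fun x : Fin 3 → ℝ => x i) ∈ V) →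
      ¬ KoopmanLTI 3 1 (fun x u => (fun i => ![(x 1) ^ 2, x 2, 0] i) +
          (!![(0 : ℝ); 0; 1]).mulVec u) V := by
  refine ⟨⟨![![0, 0, 1], ![0, 1, 0], ![1, 0, 0]], ?_, ?_, ?_⟩, ?_⟩
  · rw [Matrix.isUnit_iff_isUnit_det, Matrix.det_fin_three]
    simp
  · intro i h
    obtain rfl : i = 0 := by ext; simpa using h
    ext k
    fin_cases k <;> simp
  · intro i hi
    fin_cases i
    · simp at hi
    · refine ⟨0, 0, by simp, ?_⟩
      rw [fderiv_drift]
      ext k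
      fin_cases k <;> simp
    · -- `x₂ = 1/2` makes the Jacobian send `e₂` to exactly `e₁`
      refine ⟨fun _ => 1 / 2, 1, by simp, ?_⟩
      rw [fderiv_drift]
      ext k
      fin_cases k <;> simp
  · rintro V - hcoord ⟨hinv, B, hB⟩
    have hsq : (fun x : Fin 3 → ℝ => (x 1) ^ 2) ∈ V := by
      convert hinv _ (hcoord 0) 0 using 2 with x
      rw [(hasFDerivAt_apply (𝕜 := ℝ) (0 : Fin 3) x).fderiv]
      simp
    have hmul : (fun x : Fin 3 → ℝ => 2 * x 1 * x 2) ∈ V := by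
      convert hinv _ hsq 0 using 2 with x
      rw [fderiv_sq_coord]
      simp
    have h0 := hB ⟨_, hmul⟩ 0 1
    have h1 := hB ⟨_, hmul⟩ (fun _ => 1) 1
    simp only [fderiv_mul_coord] at h0 h1
    simp [Matrix.vecHead] at h0 h1
    linarith
end
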